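/- arXiv:1909.12858 — 2 statements merged into one kernel-verified Lean document; each statement's English description precedes it below -/
import Mathlib

section
/- Let v ∈ BT_n be such that every irreducible uniform cover inequality holds strictly at v (i.e. Σ_i v_{Y_i} > k v_Y whenever Y₁,…,Y_l is an irreducible k-uniform cover of Y ⊆ [n] other than the trivial cover {Y}). Then there exists Λ > 0 such that for every λ ≥ Λ, the vector λv lies in ψ_n; that is, there is a compact body T ⊂ ℝ^n with log|T_A| = λ v_A for all nonempty A ⊆ [n]. -/
open MeasureTheory

/-- The projection of a set `T ⊆ ℝ^n` onto the coordinate subspace spanned by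
the axes in `A`, viewed as a subset of `↥A → ℝ`. -/
def proj {n : ℕ} (A : Finset (Fin n)) (T : Set (Fin n → ℝ)) : Set (↥A → ℝ) :=
  (fun (f : Fin n → ℝ) (i : ↥A) => f i.1) '' T

/-- The constructible region `ψ_n`. -/
def psi (n : ℕ) : Set ({A : Finset (Fin n) // A.Nonempty} → ℝ) :=
  {x | ∃ T : Set (Fin n → ℝ), IsCompact T ∧
    ∀ A : {A : Finset (Fin n) // A.Nonempty}, x A = Real.log (volume (proj A.1 T)).toReal}

/-- The polyhedral cone `BT_n` of all uniform cover inequalities. -/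
def BT (n : ℕ) : Set ({A : Finset (Fin n) // A.Nonempty} → ℝ) :=
  {x | ∀ (Y : Finset (Fin n)) (hY : Y.Nonempty) (k l : ℕ)
    (Z : Fin l → Finset (Fin n)) (hZ : ∀ i, (Z i).Nonempty),
    (∀ i, Z i ⊆ Y) →
    (∀ j ∈ Y, (Finset.univ.filter fun i => j ∈ Z i).card = k) →
    (k : ℝ) * x ⟨Y, hY⟩ ≤ ∑ i, x ⟨Z i, hZ i⟩}

lemma fm (d : ℕ) : ∀ (ι : Type) [Fintype ι] (a : ι → Fin d → ℤ) (b : ι → ℝ),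
    (∃ x : Fin d → ℝ, ∀ i, ∑ j, (a i j : ℝ) * x j < b i) ∨
    (∃ c : ι → ℕ, c ≠ 0 ∧ (∀ j, ∑ i, (c i : ℤ) * a i j = 0) ∧ ∑ i, (c i : ℝ) * b i ≤ 0) := by
  induction d with
  | zero =>
    intro ι _ a b
    classical
    by_cases h : ∀ i, 0 < b i
    · left
      exact ⟨0, fun i => by simpa using h i⟩
    · right
      push Not at h
      obtain ⟨i, hi⟩ := h
      refine ⟨Pi.single i 1, ?_, fun j => j.elim0, ?_⟩
      · intro h
        have := congrFun h i
        simp at this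
      · simpa [Pi.single_apply] using hi
  | succ d ih =>
    intro ι _ a b
    classical
    let ι' := {i : ι // a i 0 = 0} ⊕ ({p : ι // 0 < a p 0} × {q : ι // a q 0 < 0})
    let m : ι' → ι → ℕ := Sum.elim (fun i => Pi.single i.1 1)
      (fun pq => Pi.single pq.1.1 (a pq.2.1 0).natAbs + Pi.single pq.2.1 (a pq.1.1 0).natAbs)
    have hm0 : ∀ i', m i' ≠ 0 := by
      rintro (i | ⟨p, q⟩) h
      · have := congrFun h i.1
        simp [m] at this
      · have := congrFun h p.1
        have hq := q.2
        simp [m] at this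
        omega
    have hma : ∀ i', ∑ i, (m i' i : ℤ) * a i 0 = 0 := by
      rintro (i | ⟨p, q⟩)
      · have := i.2
        simp [m, Pi.single_apply, this]
      · have hq := q.2
        have hp := p.2
        simp only [m, Sum.elim_inr, Pi.add_apply, Pi.single_apply, Nat.cast_add, add_mul,
          Finset.sum_add_distrib, Nat.cast_ite, Nat.cast_zero, ite_mul, zero_mul,
          Finset.sum_ite_eq', Finset.mem_univ, if_true]
        rw [Int.natCast_natAbs, Int.natCast_natAbs, abs_of_neg hq, abs_of_pos hp]
        ring
    rcases ih ι' (fun i' j => ∑ i, (m i' i : ℤ) * a i j.succ) (fun i' => ∑ i, (m i' i : ℝ) * b i)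
      with ⟨x, hx⟩ | ⟨c, hc0, hca, hcb⟩
    · left
      let r : ι → ℝ := fun i => b i - ∑ j : Fin d, (a i j.succ : ℝ) * x j
      have hr : ∀ i', 0 < ∑ i, (m i' i : ℝ) * r i := by
        intro i'
        have h := hx i'
        simp only [r, mul_sub, Finset.sum_sub_distrib]
        rw [sub_pos]
        convert h using 1
        push_cast
        simp only [Finset.sum_mul, Finset.mul_sum]
        rw [Finset.sum_comm]
        simp only [mul_assoc]
      have hr0 : ∀ i, a i 0 = 0 → 0 < r i := by
        intro i hi
        have := hr (Sum.inl ⟨i, hi⟩)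
        simpa [m, Pi.single_apply] using this
      have hrpq : ∀ p q, 0 < a p 0 → a q 0 < 0 → r q / (a q 0 : ℝ) < r p / (a p 0 : ℝ) := by
        intro p q hp hq
        have := hr (Sum.inr (⟨p, hp⟩, ⟨q, hq⟩))
        simp only [m, Sum.elim_inr, Pi.add_apply, Pi.single_apply, Nat.cast_add, add_mul,
          Finset.sum_add_distrib, Nat.cast_ite, Nat.cast_zero, ite_mul, zero_mul,
          Finset.sum_ite_eq', Finset.mem_univ, if_true] at this
        rw [Nat.cast_natAbs, Nat.cast_natAbs, abs_of_neg hq, abs_of_pos hp] at this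
        have hp' : (0 : ℝ) < a p 0 := by exact_mod_cast hp
        have hq' : (a q 0 : ℝ) < 0 := by exact_mod_cast hq
        rw [lt_div_iff₀ hp', div_mul_eq_mul_div, div_lt_iff_of_neg hq']
        push_cast at this
        linarith
      obtain ⟨t, ht1, ht2⟩ : ∃ t : ℝ, (∀ q, a q 0 < 0 → r q / (a q 0 : ℝ) < t) ∧
          (∀ p, 0 < a p 0 → t < r p / (a p 0 : ℝ)) := by
        obtain ⟨t, h1, h2⟩ := Order.exists_between_finsets
          ((Finset.univ.filter fun q => a q 0 < 0).image (fun q => r q / (a q 0 : ℝ)))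
          ((Finset.univ.filter fun q => 0 < a q 0).image (fun q => r q / (a q 0 : ℝ)))
          (by
            intro x hx y hy
            simp only [Finset.mem_image, Finset.mem_filter, Finset.mem_univ, true_and] at hx hy
            obtain ⟨q, hq, rfl⟩ := hx
            obtain ⟨p, hp, rfl⟩ := hy
            exact hrpq p q hp hq)
        exact ⟨t, fun q hq => h1 _ (Finset.mem_image.2 ⟨q, by simpa using hq, rfl⟩),
          fun p hp => h2 _ (Finset.mem_image.2 ⟨p, by simpa using hp, rfl⟩)⟩
      refine ⟨Fin.cons t x, fun i => ?_⟩
      rw [Fin.sum_univ_succ]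
      simp only [Fin.cons_zero, Fin.cons_succ]
      suffices (a i 0 : ℝ) * t < r i by simp only [r] at this; linarith
      rcases lt_trichotomy (a i 0) 0 with h | h | h
      · have h' : (a i 0 : ℝ) < 0 := by exact_mod_cast h
        have := ht1 i h
        rw [div_lt_iff_of_neg h'] at this
        linarith
      · rw [h]; simpa using hr0 i h
      · have h' : (0 : ℝ) < a i 0 := by exact_mod_cast h
        have := ht2 i h
        rw [lt_div_iff₀ h'] at this
        linarith
    · right
      refine ⟨fun i => ∑ i', c i' * m i' i, ?_, ?_, ?_⟩
      · intro h
        apply hc0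
        funext i'
        by_contra hne
        apply hm0 i'
        funext i
        have h1 := congrFun h i
        simp only [Pi.zero_apply, Finset.sum_eq_zero_iff, Finset.mem_univ, true_imp_iff,
          mul_eq_zero] at h1
        exact (h1 i').resolve_left hne
      · have key : ∀ j, ∑ i, ((∑ i', c i' * m i' i : ℕ) : ℤ) * a i j
            = ∑ i', (c i' : ℤ) * ∑ i, (m i' i : ℤ) * a i j := by
          intro j
          push_cast
          simp only [Finset.sum_mul, Finset.mul_sum]
          rw [Finset.sum_comm]
          simp only [mul_assoc]
        intro j
        rw [key]
        refine Fin.cases ?_ (fun j => ?_) j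
        · simp [hma]
        · exact hca j
      · convert hcb using 1
        push_cast
        simp only [Finset.sum_mul, Finset.mul_sum]
        rw [Finset.sum_comm]
        simp only [mul_assoc]

lemma BT_fintype {n : ℕ} {v : {A : Finset (Fin n) // A.Nonempty} → ℝ} (hv : v ∈ BT n)
    (Y : Finset (Fin n)) (hY : Y.Nonempty) (k : ℕ) {ι : Type} [Fintype ι]
    (Z : ι → Finset (Fin n)) (hZ : ∀ i, (Z i).Nonempty) (hsub : ∀ i, Z i ⊆ Y)
    (hcov : ∀ j ∈ Y, (∑ i, if j ∈ Z i then 1 else 0) = k) :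
    (k : ℝ) * v ⟨Y, hY⟩ ≤ ∑ i, v ⟨Z i, hZ i⟩ := by
  let e := (Fintype.equivFin ι).symm
  have := hv Y hY k _ (Z ∘ e) (fun i => hZ _) (fun i => hsub _) (fun j hj => by
    rw [Finset.card_filter, ← hcov j hj]
    exact e.sum_comp (fun i => if j ∈ Z i then 1 else 0))
  refine this.trans_eq ?_
  exact e.sum_comp (fun i => v ⟨Z i, hZ i⟩)

lemma strict_cover {n : ℕ}
    {v : {A : Finset (Fin n) // A.Nonempty} → ℝ} (hv : v ∈ BT n)
    (hstrict : ∀ (Y : Finset (Fin n)) (hYne : Y.Nonempty) (k l : ℕ)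
      (Z : Fin l → Finset (Fin n)) (hZ : ∀ i, (Z i).Nonempty),
      (∀ i, Z i ⊆ Y) →
      (∀ j ∈ Y, (Finset.univ.filter fun i => j ∈ Z i).card = k) →
      (∀ (S : Finset (Fin l)) (k' : ℕ), S.Nonempty → S ≠ Finset.univ →
        ¬ (∀ j ∈ Y, (S.filter fun i => j ∈ Z i).card = k')) →
      (¬ ∀ i, Z i = Y) →
      (k : ℝ) * v ⟨Y, hYne⟩ < ∑ i, v ⟨Z i, hZ i⟩)
    (Y : Finset (Fin n)) (hY : Y.Nonempty) (k : ℕ) {ι : Type} [Fintype ι] [Nonempty ι]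
    (Z : ι → Finset (Fin n)) (hZ : ∀ i, (Z i).Nonempty) (hsub : ∀ i, Z i ⊆ Y)
    (hne : ∀ i, Z i ≠ Y)
    (hcov : ∀ j ∈ Y, (∑ i, if j ∈ Z i then 1 else 0) = k) :
    (k : ℝ) * v ⟨Y, hY⟩ < ∑ i, v ⟨Z i, hZ i⟩ := by
  classical
  let Q : Finset ι → Prop := fun S => S.Nonempty ∧
    ∃ k', ∀ j ∈ Y, (∑ i ∈ S, if j ∈ Z i then 1 else 0) = k'
  obtain ⟨S, hS⟩ := (Set.toFinite {S | Q S}).exists_minimal ⟨Finset.univ, Finset.univ_nonempty, k, hcov⟩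
  obtain ⟨⟨hSne, k', hk'⟩, hmin⟩ := hS
  let e : Fin (Fintype.card S) ≃ S := (Fintype.equivFin S).symm
  have h1 := hstrict Y hY k' _ (fun i => Z (e i)) (fun i => hZ _) (fun i => hsub _)
    (fun j hj => by
      rw [Finset.card_filter, ← hk' j hj]
      rw [← Finset.sum_coe_sort S]
      exact e.sum_comp (fun i : S => if j ∈ Z i then 1 else 0))
    (by
      intro S' k'' hS'ne hS' hcov'
      apply hS'
      let f : Fin (Fintype.card S) ↪ ι := e.toEmbedding.trans (Function.Embedding.subtype _)
      have hle : S'.map f ⊆ S := by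
        intro i hi
        obtain ⟨i', _, rfl⟩ := Finset.mem_map.1 hi
        exact (e i').2
      have := hmin (y := S'.map f) ⟨by simpa using hS'ne, k'', fun j hj => by
        rw [Finset.sum_map, ← hcov' j hj, Finset.card_filter]
        rfl⟩ hle
      rw [Finset.eq_univ_iff_forall]
      intro i
      have hi := this (e i).2
      obtain ⟨i', hi', h⟩ := Finset.mem_map.1 hi
      have : i' = i := e.injective (Subtype.ext h)
      exact this ▸ hi')
    (by
      intro h
      obtain ⟨i, hi⟩ := hSne
      apply hne i
      simpa using h (e.symm ⟨i, hi⟩))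
  have hle : k' ≤ k := by
    obtain ⟨j, hj⟩ := hY
    rw [← hk' j hj, ← hcov j hj]
    exact Finset.sum_le_sum_of_subset (Finset.subset_univ S)
  have h2 := BT_fintype hv Y hY (k - k') (ι := ↥(Sᶜ)) (fun i => Z i) (fun i => hZ _)
    (fun i => hsub _) (fun j hj => by
      rw [Finset.sum_coe_sort (Sᶜ) (fun i => if j ∈ Z i then 1 else 0)]
      have := Finset.sum_add_sum_compl S (fun i => if j ∈ Z i then 1 else 0)
      rw [hk' j hj, hcov j hj] at this
      omega)
  rw [e.sum_comp (fun i : S => v ⟨Z i, hZ i⟩), Finset.sum_coe_sort S (fun i => v ⟨Z i, hZ i⟩)] at h1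
  rw [Finset.sum_coe_sort Sᶜ (fun i => v ⟨Z i, hZ i⟩), Nat.cast_sub hle] at h2
  rw [← Finset.sum_add_sum_compl S]
  linarith

lemma exists_weights {n : ℕ}
    {v : {A : Finset (Fin n) // A.Nonempty} → ℝ} (hv : v ∈ BT n)
    (hstrict : ∀ (Y : Finset (Fin n)) (hYne : Y.Nonempty) (k l : ℕ)
      (Z : Fin l → Finset (Fin n)) (hZ : ∀ i, (Z i).Nonempty),
      (∀ i, Z i ⊆ Y) →
      (∀ j ∈ Y, (Finset.univ.filter fun i => j ∈ Z i).card = k) →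
      (∀ (S : Finset (Fin l)) (k' : ℕ), S.Nonempty → S ≠ Finset.univ →
        ¬ (∀ j ∈ Y, (S.filter fun i => j ∈ Z i).card = k')) →
      (¬ ∀ i, Z i = Y) →
      (k : ℝ) * v ⟨Y, hYne⟩ < ∑ i, v ⟨Z i, hZ i⟩)
    (Y : {A : Finset (Fin n) // A.Nonempty}) :
    ∃ x : Fin n → ℝ, ∑ j ∈ Y.1, x j = v Y ∧
      ∀ A : {A : Finset (Fin n) // A.Nonempty}, A < Y → ∑ j ∈ A.1, x j < v A := by
  classical
  let I := {A : {A : Finset (Fin n) // A.Nonempty} // A < Y}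
  have conv : ∀ (A : Finset (Fin n)) (x : Fin n → ℝ),
      ∑ j, ((if j ∈ A then (1 : ℤ) else 0 : ℤ) : ℝ) * x j = ∑ j ∈ A, x j := by
    intro A x
    simp
  rcases fm n (Option I) (fun o j => o.elim (if j ∈ Y.1 then -1 else 0)
      (fun A => if j ∈ A.1.1 then 1 else 0)) (fun o => o.elim (-v Y) (fun A => v A.1))
    with ⟨x, hx⟩ | ⟨c, hc0, hca, hcb⟩
  · have hY := hx none
    have hA : ∀ A (h : A < Y), ∑ j ∈ A.1, x j < v A := by
      intro A h
      have := hx (some ⟨A, h⟩)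
      simpa using this
    have hY : v Y < ∑ j ∈ Y.1, x j := by
      simpa [ite_mul] using hY
    obtain ⟨j0, hj0⟩ := Y.2
    set δ := ∑ j ∈ Y.1, x j - v Y
    have hδ : 0 < δ := sub_pos.2 hY
    have hs : ∀ A : Finset (Fin n), ∑ j ∈ A, (x - Pi.single j0 δ : Fin n → ℝ) j
        = ∑ j ∈ A, x j - if j0 ∈ A then δ else 0 := by
      intro A
      simp [Pi.single_apply, Finset.sum_sub_distrib]
    refine ⟨x - Pi.single j0 δ, ?_, ?_⟩
    · rw [hs, if_pos hj0]; simp [δ]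
    · intro A h
      rw [hs]
      have := hA A h
      split_ifs <;> linarith
  · exfalso
    simp only [Fintype.sum_option, Option.elim] at hca hcb
    let J := Σ A : I, Fin (c (some A))
    have hcov : ∀ j ∈ Y.1, (∑ i : J, if j ∈ i.1.1.1 then 1 else 0) = c none := by
      intro j hj
      have := hca j
      rw [if_pos hj] at this
      rw [Fintype.sum_sigma]
      change ∑ A : I, ∑ _i : Fin (c (some A)), (if j ∈ A.1.1 then 1 else 0) = c none
      simp only [Finset.sum_const, Finset.card_univ, Fintype.card_fin, smul_eq_mul]
      zify
      push_cast
      linarith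
    have hJ : Nonempty J := by
      by_contra hJ
      rw [not_nonempty_iff] at hJ
      have h0 : ∀ A : I, c (some A) = 0 := by
        intro A
        by_contra h
        exact hJ.elim ⟨A, ⟨0, Nat.pos_of_ne_zero h⟩⟩
      apply hc0
      funext o
      rcases o with _ | A
      · obtain ⟨j0, hj0⟩ := Y.2
        simpa using (hcov j0 hj0).symm
      · exact h0 A
    have := strict_cover hv hstrict Y.1 Y.2 (c none) (ι := J) (fun i => i.1.1.1) (fun i => i.1.1.2)
      (fun i => i.1.2.le) (fun i h => i.1.2.ne (Subtype.ext h)) hcov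
    rw [Fintype.sum_sigma] at this
    change (c none : ℝ) * v Y < ∑ A : I, ∑ _i : Fin (c (some A)), v A.1 at this
    simp only [Finset.sum_const, Finset.card_univ, Fintype.card_fin, nsmul_eq_mul] at this
    linarith

lemma proj_Icc {n : ℕ} (A : Finset (Fin n)) (a s : Fin n → ℝ) (hs : 0 ≤ s) :
    volume (proj A (Set.Icc a (a + s))) = ENNReal.ofReal (∏ j ∈ A, s j) := by
  have h : proj A (Set.Icc a (a + s)) =
      Set.Icc (fun i : A => a i) (fun i : A => a i + s i) := by
    ext f
    constructor
    · rintro ⟨g, ⟨h1, h2⟩, rfl⟩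
      exact ⟨fun i => h1 i, fun i => h2 i⟩
    · rintro ⟨h1, h2⟩
      classical
      refine ⟨fun j => if h : j ∈ A then f ⟨j, h⟩ else a j, ⟨fun j => ?_, fun j => ?_⟩, ?_⟩
      · by_cases h : j ∈ A
        · simpa [h] using h1 ⟨j, h⟩
        · simp [h]
      · by_cases h : j ∈ A
        · simpa [h] using h2 ⟨j, h⟩
        · simpa [h] using hs j
      · funext i
        simp
  rw [h, Real.volume_Icc_pi, ← Finset.prod_coe_sort A, ENNReal.ofReal_prod_of_nonneg]
  · simp
  · intro i _
    exact hs i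

lemma exists_box {n : ℕ} (Y : Finset (Fin n)) (hY : Y.Nonempty) (y : Fin n → ℝ) (θ c : ℝ)
    (h0 : 0 ≤ θ) (h1 : θ ≤ 1) :
    ∃ B : Set (Fin n → ℝ), IsCompact B ∧ (∀ f ∈ B, ∀ j, c ≤ f j) ∧
      volume (proj Y B) = ENNReal.ofReal (θ * Real.exp (∑ j ∈ Y, y j)) ∧
      (∀ A, volume (proj A B) ≤ ENNReal.ofReal (Real.exp (∑ j ∈ A, y j))) ∧
      ∀ A, ¬ A ⊆ Y → volume (proj A B) = 0 := by
  classical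
  obtain ⟨j0, hj0⟩ := hY
  let s : Fin n → ℝ := fun j => if j ∈ Y then (if j = j0 then θ else 1) * Real.exp (y j) else 0
  have hs : 0 ≤ s := by
    intro j
    simp only [s, Pi.zero_apply]
    split_ifs <;> positivity
  have hs1 : ∀ j, s j ≤ Real.exp (y j) := by
    intro j
    have := Real.exp_pos (y j)
    simp only [s]
    split_ifs
    · nlinarith
    · linarith
    · linarith
  refine ⟨Set.Icc (fun _ => c) ((fun _ => c) + s), isCompact_Icc, fun f hf j => hf.1 j, ?_, ?_, ?_⟩
  · rw [proj_Icc _ _ _ hs, Real.exp_sum]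
    congr 1
    have : ∏ j ∈ Y, s j = ∏ j ∈ Y, (if j = j0 then θ else 1) * Real.exp (y j) :=
      Finset.prod_congr rfl fun j hj => by simp only [s, if_pos hj]
    rw [this, Finset.prod_mul_distrib]
    simp [hj0]
  · intro A
    rw [proj_Icc _ _ _ hs, Real.exp_sum]
    exact ENNReal.ofReal_le_ofReal (Finset.prod_le_prod (fun j _ => hs j) fun j _ => hs1 j)
  · intro A hA
    rw [proj_Icc _ _ _ hs]
    obtain ⟨j, hjA, hjY⟩ := Finset.not_subset.1 hA
    rw [Finset.prod_eq_zero hjA (by simp [s, hjY])]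
    simp

lemma proj_union {n : ℕ} (A : Finset (Fin n)) (S T : Set (Fin n → ℝ)) :
    proj A (S ∪ T) = proj A S ∪ proj A T := Set.image_union _ _ _

lemma proj_compact {n : ℕ} (A : Finset (Fin n)) {T : Set (Fin n → ℝ)} (hT : IsCompact T) :
    IsCompact (proj A T) := hT.image (by fun_prop)

lemma build {n : ℕ} (w : {A : Finset (Fin n) // A.Nonempty} → ℝ)
    (y : {A : Finset (Fin n) // A.Nonempty} → Fin n → ℝ) (η : ℝ)
    (hy : ∀ Y, ∑ j ∈ Y.1, y Y j = w Y)
    (hgap : ∀ Y A, A < Y → ∑ j ∈ A.1, y Y j ≤ w A - η)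
    (hη : (Fintype.card {A : Finset (Fin n) // A.Nonempty} : ℝ) * Real.exp (-η) ≤ 1)
    (F : Finset {A : Finset (Fin n) // A.Nonempty}) :
    (∀ A ∈ F, ∀ B, A ≤ B → B ∈ F) →
    ∃ T : Set (Fin n → ℝ), IsCompact T ∧
      (∀ A ∈ F, volume (proj A.1 T) = ENNReal.ofReal (Real.exp (w A))) ∧
      (∀ A ∉ F, volume (proj A.1 T) ≤ F.card * ENNReal.ofReal (Real.exp (w A - η))) := by
  classical
  induction F using Finset.strongInduction with
  | H F ih =>
    intro hup
    rcases F.eq_empty_or_nonempty with rfl | hF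
    · exact ⟨∅, isCompact_empty, by simp, by simp [proj]⟩
    obtain ⟨Y, hYF, hYmin⟩ := F.exists_minimal hF
    obtain ⟨T, hTc, hT1, hT2⟩ := ih (F.erase Y) (Finset.erase_ssubset hYF) (by
      intro A hA B hAB
      rw [Finset.mem_erase] at hA ⊢
      refine ⟨?_, hup A hA.2 B hAB⟩
      rintro rfl
      exact hA.1 (le_antisymm hAB (hYmin hA.2 hAB)))
    have hcard : (F.erase Y).card + 1 = F.card := Finset.card_erase_add_one hYF
    -- volume of the projection so far
    have hm := hT2 Y (by simp)
    have hmle : volume (proj Y.1 T) ≤ ENNReal.ofReal (Real.exp (w Y)) := by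
      refine hm.trans ?_
      rw [← ENNReal.ofReal_natCast, ← ENNReal.ofReal_mul (by positivity)]
      apply ENNReal.ofReal_le_ofReal
      rw [sub_eq_add_neg, Real.exp_add]
      have h1 : ((F.erase Y).card : ℝ) ≤
          Fintype.card {A : Finset (Fin n) // A.Nonempty} := by
        exact_mod_cast Finset.card_le_univ _
      have h2 : ((F.erase Y).card : ℝ) * Real.exp (-η) ≤ 1 :=
        (mul_le_mul_of_nonneg_right h1 (Real.exp_pos _).le).trans hη
      nlinarith [Real.exp_pos (w Y)]
    set m := (volume (proj Y.1 T)).toReal with hmdef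
    have hmv : volume (proj Y.1 T) = ENNReal.ofReal m :=
      (ENNReal.ofReal_toReal (hmle.trans_lt ENNReal.ofReal_lt_top).ne).symm
    have hm0 : 0 ≤ m := ENNReal.toReal_nonneg
    have hm1 : m ≤ Real.exp (w Y) := by
      rw [hmv] at hmle
      exact (ENNReal.ofReal_le_ofReal_iff (Real.exp_pos _).le).1 hmle
    obtain ⟨R, hR⟩ := hTc.isBounded.exists_norm_le
    have hpos := Real.exp_pos (w Y)
    obtain ⟨B, hBc, hBlow, hB1, hB2, hB3⟩ := exists_box Y.1 Y.2 (y Y)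
      ((Real.exp (w Y) - m) / Real.exp (w Y)) (R + 1)
      (div_nonneg (by linarith) hpos.le) (by rw [div_le_one hpos]; linarith)
    rw [hy, div_mul_cancel₀ _ hpos.ne'] at hB1
    refine ⟨T ∪ B, hTc.union hBc, ?_, ?_⟩
    · intro A hA
      rw [proj_union]
      by_cases hAY : A = Y
      · subst hAY
        rw [measure_union _ (proj_compact _ hBc).measurableSet, hmv, hB1,
          ← ENNReal.ofReal_add hm0 (by linarith)]
        · congr 1; ring
        · rw [Set.disjoint_left]
          rintro _ ⟨f, hf, rfl⟩ ⟨g, hg, hfg⟩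
          obtain ⟨j, hj⟩ := A.2
          have h1 := congrFun hfg ⟨j, hj⟩
          have h2 := hBlow g hg j
          have h3 := hR f hf
          have h4 := (norm_le_pi_norm f j).trans h3
          rw [Real.norm_eq_abs] at h4
          have h5 := le_abs_self (f j)
          simp only at h1
          linarith
      · have hz : volume (proj A.1 B) = 0 := by
          apply hB3
          intro h
          have hle : A ≤ Y := h
          exact hAY (le_antisymm hle (hYmin hA hle))
        have h1 := hT1 A (Finset.mem_erase.2 ⟨hAY, hA⟩)
        rw [← h1]
        apply le_antisymm
        · exact (measure_union_le _ _).trans_eq (by rw [hz, add_zero])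
        · exact measure_mono Set.subset_union_left
    · intro A hA
      rw [proj_union]
      refine (measure_union_le _ _).trans ?_
      rw [← hcard, Nat.cast_add, add_mul, Nat.cast_one, one_mul]
      refine add_le_add (hT2 A (fun h => hA (Finset.mem_of_mem_erase h))) ?_
      by_cases h : A.1 ⊆ Y.1
      · have hlt : A < Y := lt_of_le_of_ne h (fun h => hA (h ▸ hYF))
        exact (hB2 _).trans (ENNReal.ofReal_le_ofReal (Real.exp_le_exp.2 (hgap Y A hlt)))
      · rw [hB3 _ h]; exact zero_le

/-- Lemma 12: if `v ∈ BT_n` and every irreducible uniform cover inequality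
(other than the trivial cover `{Y}` of `Y`) is strict at `v`, then `λ v` is
constructible for all sufficiently large `λ`.  A cover indexed by `Fin l` is
irreducible iff no proper nonempty index subset is itself a uniform cover. -/
theorem scaled_vector_constructible {n : ℕ}
    (v : {A : Finset (Fin n) // A.Nonempty} → ℝ) (hv : v ∈ BT n)
    (hstrict : ∀ (Y : Finset (Fin n)) (hYne : Y.Nonempty) (k l : ℕ)
      (Z : Fin l → Finset (Fin n)) (hZ : ∀ i, (Z i).Nonempty),
      (∀ i, Z i ⊆ Y) →
      (∀ j ∈ Y, (Finset.univ.filter fun i => j ∈ Z i).card = k) →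
      (∀ (S : Finset (Fin l)) (k' : ℕ), S.Nonempty → S ≠ Finset.univ →
        ¬ (∀ j ∈ Y, (S.filter fun i => j ∈ Z i).card = k')) →
      (¬ ∀ i, Z i = Y) →
      (k : ℝ) * v ⟨Y, hYne⟩ < ∑ i, v ⟨Z i, hZ i⟩) :
    ∃ Λ : ℝ, 0 < Λ ∧ ∀ lam : ℝ, Λ ≤ lam → lam • v ∈ psi n := by
  classical
  choose x hx1 hx2 using exists_weights hv hstrict
  obtain ⟨ε, hε, hgap⟩ : ∃ ε : ℝ, 0 < ε ∧ ∀ Y A, A < Y → ∑ j ∈ A.1, x Y j ≤ v A - ε := by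
    let I := {p : {A : Finset (Fin n) // A.Nonempty} × {A : Finset (Fin n) // A.Nonempty} //
      p.2 < p.1}
    let g : I → ℝ := fun p => v p.1.2 - ∑ j ∈ p.1.2.1, x p.1.1 j
    have hg : ∀ p, 0 < g p := fun p => sub_pos.2 (hx2 _ _ p.2)
    rcases isEmpty_or_nonempty I with hI | hI
    · exact ⟨1, one_pos, fun Y A h => (hI.elim ⟨(Y, A), h⟩)⟩
    · obtain ⟨p, hp⟩ := Finite.exists_min g
      refine ⟨g p, hg p, fun Y A h => ?_⟩
      have := hp ⟨(Y, A), h⟩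
      simp only [g] at this ⊢
      linarith
  set N : ℝ := ((Fintype.card {A : Finset (Fin n) // A.Nonempty} : ℕ) : ℝ)
  have hN : 0 ≤ N := Nat.cast_nonneg _
  refine ⟨(N + 1) / ε, by positivity, fun lam hlam => ?_⟩
  have hle : N + 1 ≤ lam * ε := (div_le_iff₀ hε).1 hlam
  have hpos : 0 < lam := lt_of_lt_of_le (by positivity) hlam
  obtain ⟨T, hTc, hT, -⟩ := build (lam • v) (fun Y j => lam * x Y j) (lam * ε)
    (fun Y => by rw [← Finset.mul_sum, hx1]; rfl)
    (fun Y A h => by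
      rw [← Finset.mul_sum, Pi.smul_apply, smul_eq_mul, ← mul_sub]
      exact mul_le_mul_of_nonneg_left (hgap Y A h) hpos.le)
    (by
      rw [Real.exp_neg, ← div_eq_mul_inv, div_le_one (Real.exp_pos _)]
      have := Real.add_one_le_exp (lam * ε)
      change N ≤ _
      linarith)
    Finset.univ (fun _ _ _ _ => Finset.mem_univ _)
  refine ⟨T, hTc, fun A => ?_⟩
  rw [hT A (Finset.mem_univ _), ENNReal.toReal_ofReal (Real.exp_pos _).le, Real.log_exp]
end

section
/- For n ≥ 4, ψ_n is not a cone: there exists w ∈ ℝ^{2^n−1} and λ > 0 such that λw ∈ ψ_n but w ∉ ψ_n. -/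
open MeasureTheory

lemma vol_prod {n : ℕ} {A B C : Finset (Fin n)} (hA : A ⊆ C) (hB : B ⊆ C)
    (hd : Disjoint A B) (hC : A ∪ B = C) (S : Set (↥A → ℝ)) (S' : Set (↥B → ℝ)) :
    volume {x : ↥C → ℝ | (fun i : ↥A => x ⟨i.1, hA i.2⟩) ∈ S ∧
      (fun i : ↥B => x ⟨i.1, hB i.2⟩) ∈ S'} = volume S * volume S' := by
  subst hC
  have h := volume_preserving_piFinsetUnion (fun _ : Fin n => ℝ) hd
  rw [← h.measure_preimage_equiv, ← Measure.prod_prod, ← Measure.volume_eq_prod]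
  congr 1
  ext ⟨y, z⟩
  have h1 : ∀ i : ↥A, MeasurableEquiv.piFinsetUnion (fun _ : Fin n => ℝ) hd (y, z)
      ⟨i.1, hA i.2⟩ = y i := fun i =>
    Equiv.piFinsetUnion_left (fun _ : Fin n => ℝ) hd (f := y) (g := z) i.2 (hA i.2)
  have h2 : ∀ i : ↥B, MeasurableEquiv.piFinsetUnion (fun _ : Fin n => ℝ) hd (y, z)
      ⟨i.1, hB i.2⟩ = z i := fun i =>
    Equiv.piFinsetUnion_right (fun _ : Fin n => ℝ) hd (f := y) (g := z) i.2 (hB i.2)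
  simp only [Set.mem_preimage, Set.mem_ofPred_eq, h1, h2, Set.mem_prod]

lemma proj_restrict {n : ℕ} {A B : Finset (Fin n)} (h : A ⊆ B) {T : Set (Fin n → ℝ)}
    {y : ↥B → ℝ} (hy : y ∈ proj B T) : (fun i : ↥A => y ⟨i.1, h i.2⟩) ∈ proj A T := by
  obtain ⟨f, hf, rfl⟩ := hy
  exact ⟨f, hf, rfl⟩

lemma key_ineq {n : ℕ} {p q r s : Fin n} (hpq : p ≠ q) (hpr : p ≠ r) (hps : p ≠ s)
    (hqr : q ≠ r) (hqs : q ≠ s) (hrs : r ≠ s) {T : Set (Fin n → ℝ)} (hT : IsCompact T) :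
    volume (proj {p, q, r} T) * volume (proj {s} T)
      + volume (proj {p, q, s} T) * volume (proj {r} T) ≤
    volume (proj {p, q} T) * (volume (proj {r} T) * volume (proj {s} T))
      + volume (proj {p, r} T) * volume (proj {q, s} T) := by
  have e1 := vol_prod (A := {p, q, r}) (B := {s}) (C := {p, q, r, s})
    (by grind) (by grind) (by simp; grind) (by grind) (proj _ T) (proj _ T)
  have e2 := vol_prod (A := {p, q, s}) (B := {r}) (C := {p, q, r, s})
    (by grind) (by grind) (by simp; grind) (by grind) (proj _ T) (proj _ T)
  have e3 := vol_prod (A := {r}) (B := {s}) (C := {r, s})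
    (by grind) (by grind) (by simp; grind) (by grind) (proj _ T) (proj _ T)
  have e4 := vol_prod (A := {p, r}) (B := {q, s}) (C := {p, q, r, s})
    (by grind) (by grind) (by simp; grind) (by grind) (proj _ T) (proj _ T)
  rw [← e3]
  have e5 := fun S => vol_prod (A := {p, q}) (B := {r, s}) (C := {p, q, r, s})
    (by grind) (by grind) (by simp; grind) (by grind) (proj _ T) S
  rw [← e1, ← e2, ← e4, ← e5, ← measure_union_add_inter]
  · apply add_le_add
    · apply measure_mono
      rintro x (⟨h1, h2⟩ | ⟨h1, h2⟩)
      · exact ⟨proj_restrict (A := {p, q}) (B := {p, q, r}) (by grind) h1,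
          proj_restrict (A := {r}) (B := {p, q, r}) (by grind) h1, h2⟩
      · exact ⟨proj_restrict (A := {p, q}) (B := {p, q, s}) (by grind) h1,
          h2, proj_restrict (A := {s}) (B := {p, q, s}) (by grind) h1⟩
    · apply measure_mono
      rintro x ⟨⟨h1, h2⟩, ⟨h3, h4⟩⟩
      exact ⟨proj_restrict (A := {p, r}) (B := {p, q, r}) (by grind) h1,
        proj_restrict (A := {q, s}) (B := {p, q, s}) (by grind) h3⟩
  · apply IsClosed.measurableSet
    exact ((proj_compact _ hT).isClosed.preimage (by fun_prop)).inter
      ((proj_compact _ hT).isClosed.preimage (by fun_prop))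

/-- If `T_B` is null, so is `T_A` for `B ⊆ A`. -/
lemma null_mono {n : ℕ} {A B : Finset (Fin n)} (h : B ⊆ A) {T : Set (Fin n → ℝ)}
    (h0 : volume (proj B T) = 0) : volume (proj A T) = 0 := by
  have e := vol_prod (A := B) (B := A \ B) (C := A) h Finset.sdiff_subset
    Finset.disjoint_sdiff (Finset.union_sdiff_of_subset h) (proj _ T) (proj _ T)
  rw [h0, zero_mul] at e
  refine measure_mono_null ?_ e
  intro y hy
  exact ⟨proj_restrict h hy, proj_restrict Finset.sdiff_subset hy⟩

lemma proj_Icc_s16 {n : ℕ} (A : Finset (Fin n)) {c : Fin n → ℝ} (hc : 0 ≤ c) :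
    proj A (Set.Icc 0 c) = Set.Icc 0 (fun i : ↥A => c i) := by
  ext y
  constructor
  · rintro ⟨f, ⟨h1, h2⟩, rfl⟩
    exact ⟨fun i => h1 i, fun i => h2 i⟩
  · rintro ⟨h1, h2⟩
    refine ⟨fun j => if h : j ∈ A then y ⟨j, h⟩ else 0, ⟨?_, ?_⟩, ?_⟩
    · intro j
      by_cases h : j ∈ A
      · simpa [h] using h1 ⟨j, h⟩
      · simp [h]
    · intro j
      by_cases h : j ∈ A
      · simpa [h] using h2 ⟨j, h⟩
      · simpa [h] using hc j
    · ext i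
      simp

lemma vol_Icc {n : ℕ} (A : Finset (Fin n)) {c : Fin n → ℝ} (hc : 0 ≤ c) :
    (volume (Set.Icc 0 (fun i : ↥A => c i))).toReal = ∏ i ∈ A, c i := by
  rw [Real.volume_Icc_pi_toReal (a := 0) (b := fun i : ↥A => c i) (fun i => hc i), ← Finset.prod_coe_sort A]
  simp

lemma vol_one {n : ℕ} (A : Finset (Fin n)) {a b c : Fin n → ℝ} (ha : 0 ≤ a) (hb : 0 ≤ b)
    (hc : 0 ≤ c) (hca : ∀ i ∈ A, c i ≤ a i) (h0 : ∏ i ∈ A, b i = 0) :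
    (volume (proj A (Set.Icc 0 a ∪ Set.Icc 0 b ∪ Set.Icc 0 c))).toReal = ∏ i ∈ A, a i := by
  have hb0 : volume (Set.Icc 0 (fun i : ↥A => b i)) = 0 := by
    have := vol_Icc A hb
    rw [h0, ENNReal.toReal_eq_zero_iff] at this
    exact this.resolve_right isCompact_Icc.measure_lt_top.ne
  rw [← vol_Icc A ha]
  congr 1
  have e : proj A (Set.Icc 0 a ∪ Set.Icc 0 b ∪ Set.Icc 0 c) =
      Set.Icc 0 (fun i : ↥A => a i) ∪ Set.Icc 0 (fun i : ↥A => b i) := by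
    rw [← proj_Icc_s16 A ha, ← proj_Icc_s16 A hb]
    have : proj A (Set.Icc 0 c) ⊆ proj A (Set.Icc 0 a) := by
      rw [proj_Icc_s16 A ha, proj_Icc_s16 A hc]
      exact Set.Icc_subset_Icc le_rfl (fun i => hca i i.2)
    unfold proj at this ⊢
    rw [Set.image_union, Set.image_union, Set.union_right_comm, Set.union_eq_left.2 this]
  rw [e]
  exact le_antisymm ((measure_union_le _ _).trans (by rw [hb0, add_zero]))
    (measure_mono Set.subset_union_left)

lemma vol_two {n : ℕ} (A : Finset (Fin n)) {a b c : Fin n → ℝ} (ha : 0 ≤ a) (hb : 0 ≤ b)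
    (hc : 0 ≤ c) (hca : ∀ i ∈ A, c i = min (a i) (b i)) :
    (volume (proj A (Set.Icc 0 a ∪ Set.Icc 0 b ∪ Set.Icc 0 c))).toReal =
      ∏ i ∈ A, a i + ∏ i ∈ A, b i - ∏ i ∈ A, c i := by
  rw [← vol_Icc A ha, ← vol_Icc A hb, ← vol_Icc A hc]
  have e : proj A (Set.Icc 0 a ∪ Set.Icc 0 b ∪ Set.Icc 0 c) =
      Set.Icc 0 (fun i : ↥A => a i) ∪ Set.Icc 0 (fun i : ↥A => b i) := by
    rw [← proj_Icc_s16 A ha, ← proj_Icc_s16 A hb]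
    have : proj A (Set.Icc 0 c) ⊆ proj A (Set.Icc 0 a) := by
      rw [proj_Icc_s16 A ha, proj_Icc_s16 A hc]
      exact Set.Icc_subset_Icc le_rfl (fun i => by simp [hca i i.2])
    unfold proj at this ⊢
    rw [Set.image_union, Set.image_union, Set.union_right_comm, Set.union_eq_left.2 this]
  have e' : Set.Icc 0 (fun i : ↥A => a i) ∩ Set.Icc 0 (fun i : ↥A => b i) =
      Set.Icc 0 (fun i : ↥A => c i) := by
    rw [Set.Icc_inter_Icc]
    congr 1
    · simp
    · ext i
      simp [hca i i.2]
  have h := measure_union_add_inter (μ := volume) (Set.Icc 0 (fun i : ↥A => a i))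
    (t := Set.Icc 0 (fun i : ↥A => b i)) measurableSet_Icc
  rw [e', ← e] at h
  have h' := congrArg ENNReal.toReal h
  have fa : volume (Set.Icc 0 (fun i : ↥A => a i)) ≠ ⊤ := isCompact_Icc.measure_lt_top.ne
  have fb : volume (Set.Icc 0 (fun i : ↥A => b i)) ≠ ⊤ := isCompact_Icc.measure_lt_top.ne
  have fc : volume (Set.Icc 0 (fun i : ↥A => c i)) ≠ ⊤ := isCompact_Icc.measure_lt_top.ne
  have fd : volume (proj A (Set.Icc 0 a ∪ Set.Icc 0 b ∪ Set.Icc 0 c)) ≠ ⊤ :=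
    (proj_compact A ((isCompact_Icc.union isCompact_Icc).union isCompact_Icc)).measure_lt_top.ne
  rw [ENNReal.toReal_add fd fc, ENNReal.toReal_add fa fb] at h'
  linarith

/-- Recover a volume from its logarithm. -/
lemma half_log {v y z : ℝ} (hv : 0 ≤ v) (hv0 : v ≠ 0) (hz : 0 < z) (hy : y = z ^ 2)
    (h : 2⁻¹ * Real.log y = Real.log v) : v = z := by
  subst hy
  rw [Real.log_pow] at h
  apply Real.log_injOn_pos (lt_of_le_of_ne hv (Ne.symm hv0)) hz
  rw [← h]
  push_cast
  ring

/-- For `n ≥ 4`, `ψ_n` is not a cone: some `λ w` with `λ > 0` is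
constructible while `w` is not. -/
theorem psi_not_cone {n : ℕ} (hn : 4 ≤ n) :
    ∃ (w : {A : Finset (Fin n) // A.Nonempty} → ℝ) (lam : ℝ),
      0 < lam ∧ lam • w ∈ psi n ∧ w ∉ psi n := by
  obtain ⟨p, q, r, s, hpq, hpr, hps, hqr, hqs, hrs⟩ : ∃ p q r s : Fin n,
      p ≠ q ∧ p ≠ r ∧ p ≠ s ∧ q ≠ r ∧ q ≠ s ∧ r ≠ s :=
    ⟨⟨0, by omega⟩, ⟨1, by omega⟩, ⟨2, by omega⟩, ⟨3, by omega⟩, by simp⟩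
  obtain ⟨a, ha⟩ : ∃ a : Fin n → ℝ, ∀ j, a j = if j = p then 1/4 else if j = s then 0 else 1 :=
    ⟨_, fun _ => rfl⟩
  obtain ⟨b, hb⟩ : ∃ a : Fin n → ℝ, ∀ j, a j = if j = q then 1/4 else if j = r then 0 else 1 :=
    ⟨_, fun _ => rfl⟩
  obtain ⟨c, hc⟩ : ∃ a : Fin n → ℝ, ∀ j, a j = if j = p then 1/4 else if j = q then 1/4 else 1 :=
    ⟨_, fun _ => rfl⟩
  have ha0 : 0 ≤ a := fun j => by rw [ha]; simp only [Pi.zero_apply]; split_ifs <;> norm_num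
  have hb0 : 0 ≤ b := fun j => by rw [hb]; simp only [Pi.zero_apply]; split_ifs <;> norm_num
  have hc0 : 0 ≤ c := fun j => by rw [hc]; simp only [Pi.zero_apply]; split_ifs <;> norm_num
  have ap : a p = 1/4 := by grind
  have aq : a q = 1 := by grind
  have ar : a r = 1 := by grind
  have as : a s = 0 := by grind
  have bp : b p = 1 := by grind
  have bq : b q = 1/4 := by grind
  have br : b r = 0 := by grind
  have bs : b s = 1 := by grind
  have cp : c p = 1/4 := by grind
  have cq : c q = 1/4 := by grind
  have cr : c r = 1 := by grind
  have cs : c s = 1 := by grind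
  clear ha hb hc
  set T := Set.Icc 0 a ∪ Set.Icc 0 b ∪ Set.Icc 0 c with hTdef
  have hT' : T = Set.Icc 0 b ∪ Set.Icc 0 a ∪ Set.Icc 0 c := by
    rw [hTdef, Set.union_comm (Set.Icc 0 a)]
  have hT : IsCompact T := (isCompact_Icc.union isCompact_Icc).union isCompact_Icc
  have v1 : (volume (proj {r} T)).toReal = 1 := by
    rw [hTdef, vol_one _ ha0 hb0 hc0] <;> simp [*]
  have v2 : (volume (proj {s} T)).toReal = 1 := by
    rw [hT', vol_one _ hb0 ha0 hc0] <;> simp [*]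
  have v3 : (volume (proj {p, r} T)).toReal = 1/4 := by
    rw [hTdef, vol_one _ ha0 hb0 hc0] <;> simp [Finset.prod_insert, *]
  have v4 : (volume (proj {q, s} T)).toReal = 1/4 := by
    rw [hT', vol_one _ hb0 ha0 hc0] <;> simp [Finset.prod_insert, *]
  have v5 : (volume (proj {p, q, r} T)).toReal = 1/4 := by
    rw [hTdef, vol_one _ ha0 hb0 hc0] <;> simp [Finset.prod_insert, *] <;> norm_num
  have v6 : (volume (proj {p, q, s} T)).toReal = 1/4 := by
    rw [hT', vol_one _ hb0 ha0 hc0] <;> simp [Finset.prod_insert, *] <;> norm_num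
  have v7 : (volume (proj {p, q} T)).toReal = 7/16 := by
    rw [hTdef, vol_two _ ha0 hb0 hc0] <;> simp [Finset.prod_insert, *] <;> norm_num
  clear_value T
  refine ⟨(2 : ℝ)⁻¹ • fun A => Real.log (volume (proj A.1 T)).toReal, 2, by norm_num,
    ⟨T, hT, fun A => by simp⟩, ?_⟩
  rintro ⟨S, hS, hw⟩
  have hw' : ∀ A : Finset (Fin n), A.Nonempty → 2⁻¹ * Real.log (volume (proj A T)).toReal =
      Real.log (volume (proj A S)).toReal := fun A hA => by simpa using hw ⟨A, hA⟩
  have fin : ∀ A, volume (proj A S) ≠ ⊤ := fun A => (proj_compact A hS).measure_lt_top.ne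
  have hne : ∀ A : Finset (Fin n), A.Nonempty → (volume (proj A T)).toReal = 1/4 →
      (volume (proj A S)).toReal ≠ 0 := by
    intro A hA h1 h0
    have h := hw' A hA
    rw [h1, h0, Real.log_zero] at h
    have : Real.log (1/4) < 0 := Real.log_neg (by norm_num) (by norm_num)
    linarith
  have hsub : ∀ A B : Finset (Fin n), B ⊆ A → (volume (proj A S)).toReal ≠ 0 →
      (volume (proj B S)).toReal ≠ 0 := by
    intro A B hAB h h0
    rw [ENNReal.toReal_eq_zero_iff] at h0
    apply h
    rw [null_mono hAB (h0.resolve_right (fin B))]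
    rfl
  have n5 := hne {p, q, r} (by simp) v5
  have n6 := hne {p, q, s} (by simp) v6
  have n1 := hsub _ {r} (by grind) n5
  have n2 := hsub _ {s} (by grind) n6
  have n7 := hsub _ {p, q} (by grind) n6
  have n3 := hne {p, r} (by simp) v3
  have n4 := hne {q, s} (by simp) v4
  have u1 := half_log ENNReal.toReal_nonneg n1 one_pos (by rw [v1]; norm_num) (hw' _ (by simp))
  have u2 := half_log ENNReal.toReal_nonneg n2 one_pos (by rw [v2]; norm_num) (hw' _ (by simp))
  have u3 := half_log ENNReal.toReal_nonneg n3 one_half_pos (by rw [v3]; norm_num)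
    (hw' _ (by simp))
  have u4 := half_log ENNReal.toReal_nonneg n4 one_half_pos (by rw [v4]; norm_num)
    (hw' _ (by simp))
  have u5 := half_log ENNReal.toReal_nonneg n5 one_half_pos (by rw [v5]; norm_num)
    (hw' _ (by simp))
  have u6 := half_log ENNReal.toReal_nonneg n6 one_half_pos (by rw [v6]; norm_num)
    (hw' _ (by simp))
  have u7 := half_log ENNReal.toReal_nonneg n7 (z := √(7/16)) (by positivity)
    (by rw [v7, Real.sq_sqrt (by norm_num)]) (hw' _ (by simp))
  have k := key_ineq hpq hpr hps hqr hqs hrs hS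
  have k' := ENNReal.toReal_mono (ENNReal.add_ne_top.2
    ⟨ENNReal.mul_ne_top (fin _) (ENNReal.mul_ne_top (fin _) (fin _)),
      ENNReal.mul_ne_top (fin _) (fin _)⟩) k
  rw [ENNReal.toReal_add (ENNReal.mul_ne_top (fin _) (fin _)) (ENNReal.mul_ne_top (fin _) (fin _)),
    ENNReal.toReal_add (ENNReal.mul_ne_top (fin _) (ENNReal.mul_ne_top (fin _) (fin _)))
      (ENNReal.mul_ne_top (fin _) (fin _))] at k'
  simp only [ENNReal.toReal_mul, u1, u2, u3, u4, u5, u6, u7] at k'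
  have : √(7/16) < 3/4 := by
    rw [Real.sqrt_lt' (by norm_num)]
    norm_num
  linarith
end
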